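/- Fix k ≥ 1, a finite set X with a nondegenerate closed axis-parallel box B_x ⊂ ℝ^k for each x ∈ X, a finite set A with a map s : A → X, and a subset A₀ ⊆ A with s₀ := s|_{A₀}. Let E°({B_x}, s) be the space of tuples (B_a)_{a∈A} of nondegenerate closed axis-parallel boxes such that each B_a is contained in the interior of B_{s(a)} and, for each x ∈ X, the boxes {B_a : s(a) = x} are pairwise disjoint; define E°({B_x}, s₀) analogously, and let ρ : E°({B_x}, s) → E°({B_x}, s₀) be the map forgetting the boxes labeled by A \ A₀. Then for every i ≤ k−1, given continuous maps h : S^{i−1} → E°({B_x}, s) and g : D^i → E°({B_x}, s₀) with ρ ∘ h equal to the restriction of g to S^{i−1}, there exists a continuous lift G : D^i → E°({B_x}, s) with ρ ∘ G = g and G restricted to S^{i−1} equal to h. -/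

import Mathlib

/-- The space `E°({B_x}, s)` of tuples `(B_a)_{a ∈ A}` of nondegenerate closed
axis-parallel boxes in `ℝ^k` (parametrized by corner coordinates), each contained
in the interior of the ambient box `B_{s(a)} = Icc (Bc (s a)) (Bd (s a))`, and such
that for each `x ∈ X` the boxes labelled by `a` with `s a = x` are pairwise
disjoint.  It is topologized as a subspace of `((ℝ^k)²)^A`. -/
def OpenBoxTuples (k : ℕ) {X A : Type} (Bc Bd : X → (Fin k → ℝ)) (s : A → X) :
    Set (A → (Fin k → ℝ) × (Fin k → ℝ)) :=
  {t | (∀ a, ∀ i, (t a).1 i < (t a).2 i) ∧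
       (∀ a, Set.Icc (t a).1 (t a).2 ⊆
         interior (Set.Icc (Bc (s a)) (Bd (s a)))) ∧
       ∀ a a', a ≠ a' → s a = s a' →
         Disjoint (Set.Icc (t a).1 (t a).2) (Set.Icc (t a').1 (t a').2)}

/-!
Proof idea. The forgotten boxes can be restored one at a time, so it is enough to extend a single
moving box, prescribed over a closed subset `S` of the compact base `Z`, in the complement of
finitely many disjoint moving boxes. First choose where the new box should shrink to: a moving point
that over `S` lies inside the prescribed box. Extend the midpoint of the prescribed box by Tietze,
perturb it off the midpoints of the obstacles, which is possible when `dim Z < k`, and push it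
radially out of the obstacles. As the constraints are open, a box around this point is admissible
when it is small enough, and its size can be interpolated with the prescribed one over `S`.

The dimension of `Z` enters only through the density of the nowhere vanishing maps `Z → ℝ^k`. By the
Hurewicz-Wallman theorem this is equivalent to `dim Z < k` for compact metric spaces; for
`Z = D^i` it holds because the image of a `C^1` map from `ℝ^i` has dense complement in `ℝ^k`.
-/

open Set Topology Module

local infix:50 " ≺ " => StrongLT

section GeneralPosition

theorem isOpen_setOf_forall_prodMk_mem {Z V : Type*} [TopologicalSpace Z] [CompactSpace Z]
    [LocallyCompactSpace Z] [TopologicalSpace V] {W : Set (Z × V)} (hW : IsOpen W) :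
    IsOpen {f : C(Z, V) | ∀ z, (z, f z) ∈ W} := by
  have hgraph : Continuous fun x : C(Z, V) × Z => (x.2, x.1 x.2) := by fun_prop
  refine isOpen_iff_eventually.2 fun f hf => ?_
  have hnear : ∀ᶠ g in 𝓝 f, ∀ z ∈ univ, (z, g z) ∈ W :=
    isCompact_univ.eventually_forall_of_forall_eventually fun z _ =>
      (hW.preimage hgraph).mem_nhds (hf z)
  exact hnear.mono fun g hg z => hg z trivial

theorem dense_setOf_forall_ne_zero_of_finrank_lt {E V : Type*} [NormedAddCommGroup E]
    [NormedSpace ℝ E] [FiniteDimensional ℝ E] [NormedAddCommGroup V] [NormedSpace ℝ V]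
    [FiniteDimensional ℝ V] (hEV : finrank ℝ E < finrank ℝ V) {D : Set E} (hD : IsCompact D) :
    Dense {f : C(D, V) | ∀ z, f z ≠ 0} := by
  have : CompactSpace D := isCompact_iff_compactSpace.1 hD
  have : TietzeExtension V := TietzeExtension.of_tvs ℝ
  refine Metric.dense_iff.2 fun f ε hε => ?_
  obtain ⟨F, hF⟩ := ContinuousMap.exists_restrict_eq hD.isClosed f
  obtain ⟨f₁, hf₁, hf₁F, -⟩ := F.continuous.exists_contDiff_approx 1
    (ε := fun _ => ε / 3) continuous_const fun _ => by positivity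
  obtain ⟨v, hv, hvε⟩ := (hf₁.dense_compl_range_of_finrank_lt_finrank hEV).exists_dist_lt 0
    (show 0 < ε / 3 by positivity)
  let f₂ : C(D, V) := ⟨fun z => f₁ z - v, by have := hf₁.continuous; fun_prop⟩
  refine ⟨f₂, (ContinuousMap.dist_lt_iff hε).2 fun z => ?_, fun z hz => ?_⟩
  · calc dist (f₁ z - v) (f z) ≤ dist (f₁ z - v) (f₁ z) + dist (f₁ z) (f z) := dist_triangle _ _ _
      _ < ε / 3 + ε / 3 := by
        refine add_lt_add ?_ ?_
        · simpa using hvε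
        · simpa [← hF] using hf₁F z
      _ < ε := by linarith
  · exact hv ⟨z, sub_eq_zero.1 hz⟩

theorem dense_setOf_forall_ne {Z V A : Type*} [TopologicalSpace Z] [CompactSpace Z]
    [LocallyCompactSpace Z] [NormedAddCommGroup V] [CompleteSpace V]
    (hZ : Dense {f : C(Z, V) | ∀ z, f z ≠ 0}) {T : Set A} (hT : T.Countable) (m : A → C(Z, V)) :
    Dense {f : C(Z, V) | ∀ a ∈ T, ∀ z, f z ≠ m a z} := by
  have hopen (a : A) : IsOpen {f : C(Z, V) | ∀ z, f z ≠ m a z} :=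
    isOpen_setOf_forall_prodMk_mem
      (isOpen_ne_fun continuous_snd ((m a).continuous.comp continuous_fst))
  have hdense (a : A) : Dense {f : C(Z, V) | ∀ z, f z ≠ m a z} := by
    simpa [sub_ne_zero] using! hZ.preimage (Homeomorph.subRight (m a)).isOpenMap
  simpa only [ofPred_forall] using
    dense_biInter_of_isOpen (fun a _ => hopen a) hT fun a _ => hdense a

/- Each `p z` is moved along the ray from `m a z` until its gauge is `1`. As the sets `N ≤ 1` are
disjoint, at most one summand of the total displacement is nonzero. -/
theorem exists_pushOut {Z V A : Type*} [TopologicalSpace Z] [AddCommGroup V] [Module ℝ V]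
    [TopologicalSpace V] [IsTopologicalAddGroup V] [ContinuousSMul ℝ V] {T : Finset A}
    {m : A → C(Z, V)} {N : A → Z → V → ℝ}
    (hN : ∀ a ∈ T, ∀ z r v, 0 ≤ r → N a z (r • v) = r * N a z v) (p : C(Z, V))
    (hNp : ∀ a ∈ T, Continuous fun z => N a z (p z - m a z))
    (hpos : ∀ a ∈ T, ∀ z, 0 < N a z (p z - m a z))
    (hdisj : (T : Set A).Pairwise fun a a' =>
      ∀ z v, N a z (v - m a z) ≤ 1 → 1 < N a' z (v - m a' z)) :
    ∃ q : C(Z, V), ∀ z, (q z = p z ∧ ∀ a ∈ T, 1 ≤ N a z (p z - m a z)) ∨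
      ∃ a ∈ T, N a z (p z - m a z) < 1 ∧ N a z (q z - m a z) = 1 := by
  let coeff (a : A) (z : Z) : ℝ := max 1 (N a z (p z - m a z))⁻¹ - 1
  have hcoeff_zero {a z} (h : 1 ≤ N a z (p z - m a z)) : coeff a z = 0 := by
    simp only [coeff, max_eq_left (inv_le_one_of_one_le₀ h), sub_self]
  have hcoeff_cont : ∀ a ∈ T, Continuous (coeff a) := fun a ha =>
    (continuous_const.max ((hNp a ha).inv₀ fun z => (hpos a ha z).ne')).sub continuous_const
  let q : C(Z, V) := ⟨fun z => p z + ∑ a ∈ T, coeff a z • (p z - m a z),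
    p.continuous.add (continuous_finsetSum _ fun a ha =>
      (hcoeff_cont a ha).smul (p.continuous.sub (m a).continuous))⟩
  refine ⟨q, fun z => ?_⟩
  by_cases hout : ∀ a ∈ T, 1 ≤ N a z (p z - m a z)
  · refine Or.inl ⟨?_, hout⟩
    simp +contextual [q, hcoeff_zero, hout]
  · push Not at hout
    obtain ⟨a, ha, hlt⟩ := hout
    refine Or.inr ⟨a, ha, hlt, ?_⟩
    have hsum : ∑ a' ∈ T, coeff a' z • (p z - m a' z) = coeff a z • (p z - m a z) :=
      Finset.sum_eq_single_of_mem a ha fun a' ha' hne => by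
        rw [hcoeff_zero (hdisj ha ha' hne.symm z (p z) hlt.le).le, zero_smul]
    have hq : q z - m a z = (N a z (p z - m a z))⁻¹ • (p z - m a z) := by
      simp only [q, ContinuousMap.coe_mk, hsum, coeff,
        max_eq_right (one_le_inv_iff₀.2 ⟨hpos a ha z, hlt.le⟩)]
      module
    rw [hq, hN a ha _ _ _ (inv_nonneg.2 (hpos a ha z).le), inv_mul_cancel₀ (hpos a ha z).ne']

end GeneralPosition

section Boxes

/-- The corner pair `(c, d)` of the box `Icc c d`. The order `c ≤ d` is not imposed, so that
corner pairs form a vector space. -/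
abbrev CornerPair (n : Type*) := (n → ℝ) × (n → ℝ)

variable {n A : Type*}

/-- The open box with corners `B.1` and `B.2`, which is the interior of `Icc B.1 B.2`. -/
def openBox (B : CornerPair n) : Set (n → ℝ) :=
  {y | B.1 ≺ y ∧ y ≺ B.2}

/-- Strict separation of two boxes in some coordinate direction. For nondegenerate boxes this is
disjointness, but unlike disjointness it is an open condition on all corner pairs. -/
def BoxSep (B C : CornerPair n) : Prop :=
  ∃ i, B.2 i < C.1 i ∨ C.2 i < B.1 i

/-- The box `B` is an admissible position for a new box in the ambient box `U` in the presence of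
the boxes `C a` with `a ∈ T`. Degenerate boxes are allowed: a point `q` outside of all `C a` is
the free box `(q, q)`. -/
structure IsFreeBox (U : CornerPair n) (T : Set A) (C : A → CornerPair n)
    (B : CornerPair n) : Prop where
  lower : U.1 ≺ B.1
  upper : B.2 ≺ U.2
  sep : ∀ a ∈ T, BoxSep B (C a)

/-- The boxes `C a` with `a ∈ T` are nondegenerate, lie in the interior of the ambient box `U`, and
are pairwise disjoint. -/
structure IsBoxFamilyOn (U : CornerPair n) (T : Set A) (C : A → CornerPair n) : Prop where
  nondegenerate : ∀ a ∈ T, (C a).1 ≺ (C a).2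
  lower : ∀ a ∈ T, U.1 ≺ (C a).1
  upper : ∀ a ∈ T, (C a).2 ≺ U.2
  pairwise_sep : T.Pairwise fun a a' => BoxSep (C a) (C a')

theorem isFreeBox_iff {U B : CornerPair n} {T : Set A} {C : A → CornerPair n} :
    IsFreeBox U T C B ↔ U.1 ≺ B.1 ∧ B.2 ≺ U.2 ∧ ∀ a ∈ T, BoxSep B (C a) :=
  ⟨fun h => ⟨h.lower, h.upper, h.sep⟩, fun h => ⟨h.1, h.2.1, h.2.2⟩⟩

theorem isBoxFamilyOn_iff {U : CornerPair n} {T : Set A} {C : A → CornerPair n} :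
    IsBoxFamilyOn U T C ↔ (∀ a ∈ T, (C a).1 ≺ (C a).2) ∧ (∀ a ∈ T, U.1 ≺ (C a).1) ∧
      (∀ a ∈ T, (C a).2 ≺ U.2) ∧ T.Pairwise fun a a' => BoxSep (C a) (C a') :=
  ⟨fun h => ⟨h.nondegenerate, h.lower, h.upper, h.pairwise_sep⟩,
    fun h => ⟨h.1, h.2.1, h.2.2.1, h.2.2.2⟩⟩

theorem BoxSep.symm {B C : CornerPair n} (h : BoxSep B C) : BoxSep C B :=
  h.imp fun _ => Or.symm

theorem disjoint_Icc_iff_boxSep {B C : CornerPair n} (hB : B.1 ≺ B.2) (hC : C.1 ≺ C.2) :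
    Disjoint (Icc B.1 B.2) (Icc C.1 C.2) ↔ BoxSep B C := by
  rw [disjoint_iff_inter_eq_empty, Icc_inter_Icc, Icc_eq_empty_iff, Pi.le_def, not_forall]
  refine exists_congr fun i => ?_
  have := hB i
  have := hC i
  simp only [Pi.sup_apply, Pi.inf_apply, sup_le_iff, le_inf_iff]
  grind

theorem notMem_Icc_iff_boxSep {q : n → ℝ} {B : CornerPair n} :
    q ∉ Icc B.1 B.2 ↔ BoxSep (q, q) B := by
  simp only [mem_Icc, Pi.le_def, not_and_or, not_forall, not_le, BoxSep, exists_or]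

theorem interior_Icc_eq_openBox [Finite n] (B : CornerPair n) :
    interior (Icc B.1 B.2) = openBox B := by
  ext y
  simp only [← pi_univ_Icc, interior_pi_set finite_univ, interior_Icc, mem_univ_pi, mem_Ioo,
    forall_and, openBox, StrongLT, mem_ofPred_eq]

theorem Icc_subset_interior_Icc_iff [Finite n] {B U : CornerPair n} (hB : B.1 ≤ B.2) :
    Icc B.1 B.2 ⊆ interior (Icc U.1 U.2) ↔ U.1 ≺ B.1 ∧ B.2 ≺ U.2 := by
  rw [interior_Icc_eq_openBox]
  constructor
  · intro h
    exact ⟨(h (left_mem_Icc.2 hB)).1, (h (right_mem_Icc.2 hB)).2⟩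
  · rintro ⟨hU₁, hU₂⟩ y ⟨hy₁, hy₂⟩
    exact ⟨hU₁.trans_le hy₁, hy₂.trans_strongLT hU₂⟩

theorem IsFreeBox.anti {U B B' : CornerPair n} {T : Set A} {C : A → CornerPair n}
    (hB : IsFreeBox U T C B) (h₁ : B.1 ≤ B'.1) (h₂ : B'.2 ≤ B.2) : IsFreeBox U T C B' where
  lower := hB.lower.trans_le h₁
  upper := h₂.trans_strongLT hB.upper
  sep a ha := (hB.sep a ha).imp fun i => Or.imp (h₂ i).trans_lt fun h => h.trans_le (h₁ i)

theorem IsFreeBox.congr {U B : CornerPair n} {T : Set A} {C C' : A → CornerPair n}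
    (hB : IsFreeBox U T C B) (h : EqOn C C' T) : IsFreeBox U T C' B where
  lower := hB.lower
  upper := hB.upper
  sep a ha := h ha ▸ hB.sep a ha

theorem IsBoxFamilyOn.mono {U : CornerPair n} {T T' : Set A} {C : A → CornerPair n}
    (hC : IsBoxFamilyOn U T C) (h : T' ⊆ T) : IsBoxFamilyOn U T' C where
  nondegenerate a ha := hC.nondegenerate a (h ha)
  lower a ha := hC.lower a (h ha)
  upper a ha := hC.upper a (h ha)
  pairwise_sep := hC.pairwise_sep.mono h

theorem IsBoxFamilyOn.congr {U : CornerPair n} {T : Set A} {C C' : A → CornerPair n}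
    (hC : IsBoxFamilyOn U T C) (h : EqOn C C' T) : IsBoxFamilyOn U T C' where
  nondegenerate a ha := h ha ▸ hC.nondegenerate a ha
  lower a ha := h ha ▸ hC.lower a ha
  upper a ha := h ha ▸ hC.upper a ha
  pairwise_sep a ha a' ha' hne := by
    simpa only [h ha, h ha'] using hC.pairwise_sep ha ha' hne

theorem isBoxFamilyOn_insert {U : CornerPair n} {T : Set A} {C : A → CornerPair n} {a : A}
    (ha : a ∉ T) : IsBoxFamilyOn U (insert a T) C ↔
      (C a).1 ≺ (C a).2 ∧ IsFreeBox U T C (C a) ∧ IsBoxFamilyOn U T C := by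
  have : Std.Symm fun a a' => BoxSep (C a) (C a') := ⟨fun _ _ => BoxSep.symm⟩
  simp only [isBoxFamilyOn_iff, isFreeBox_iff, forall_mem_insert,
    pairwise_insert_of_symm_of_notMem ha]
  tauto

theorem isBoxFamilyOn_image {A₀ : Type*} {U : CornerPair n} {ι : A₀ → A}
    (hι : Function.Injective ι) {T : Set A₀} {C : A → CornerPair n} :
    IsBoxFamilyOn U (ι '' T) C ↔ IsBoxFamilyOn U T (C ∘ ι) := by
  simp only [isBoxFamilyOn_iff, forall_mem_image, hι.injOn.pairwise_image,
    Function.comp_apply]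

theorem mem_openBoxTuples_iff {k : ℕ} {X A : Type} {Bc Bd : X → Fin k → ℝ} {s : A → X}
    {t : A → CornerPair (Fin k)} :
    t ∈ OpenBoxTuples k Bc Bd s ↔ ∀ x, IsBoxFamilyOn (Bc x, Bd x) (s ⁻¹' {x}) t := by
  constructor
  · rintro ⟨hlt, hsub, hdisj⟩ x
    have hint (a : A) (ha : s a = x) := ha ▸
      (Icc_subset_interior_Icc_iff (U := (Bc (s a), Bd (s a))) (le_of_strongLT (hlt a))).1 (hsub a)
    exact ⟨fun a _ => hlt a, fun a ha => (hint a ha).1, fun a ha => (hint a ha).2,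
      fun a ha a' ha' hne => (disjoint_Icc_iff_boxSep (hlt a) (hlt a')).1
        (hdisj a a' hne (ha.trans ha'.symm))⟩
  · intro h
    have hlt (a : A) := (h (s a)).nondegenerate a rfl
    exact ⟨hlt, fun a => (Icc_subset_interior_Icc_iff (U := (Bc (s a), Bd (s a)))
        (le_of_strongLT (hlt a))).2 ⟨(h (s a)).lower a rfl, (h (s a)).upper a rfl⟩,
      fun a a' hne hs => (disjoint_Icc_iff_boxSep (hlt a) (hlt a')).2
        ((h (s a)).pairwise_sep rfl hs.symm hne)⟩

theorem isOpen_setOf_strongLT [Finite n] : IsOpen {x : CornerPair n | x.1 ≺ x.2} := by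
  simp only [StrongLT, ofPred_forall]
  exact isOpen_iInter_of_finite fun i => isOpen_lt (by fun_prop) (by fun_prop)

theorem isOpen_setOf_mem_openBox [Finite n] :
    IsOpen {x : CornerPair n × (n → ℝ) | x.2 ∈ openBox x.1} :=
  (isOpen_setOf_strongLT.preimage
    (f := fun x : CornerPair n × (n → ℝ) => (x.1.1, x.2)) (by fun_prop)).inter <|
    isOpen_setOf_strongLT.preimage
      (f := fun x : CornerPair n × (n → ℝ) => (x.2, x.1.2)) (by fun_prop)

theorem isOpen_setOf_boxSep [Finite n] :
    IsOpen {x : CornerPair n × CornerPair n | BoxSep x.1 x.2} := by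
  simp only [BoxSep, ofPred_exists, ofPred_or]
  exact isOpen_iUnion fun i =>
    (isOpen_lt (by fun_prop) (by fun_prop)).union (isOpen_lt (by fun_prop) (by fun_prop))

theorem isOpen_setOf_isFreeBox [Finite n] (U : CornerPair n) {T : Set A} (hT : T.Finite) :
    IsOpen {x : (A → CornerPair n) × CornerPair n | IsFreeBox U T x.1 x.2} := by
  simp only [isFreeBox_iff, ofPred_and, ofPred_forall]
  exact (isOpen_setOf_strongLT.preimage (f := fun x : (A → CornerPair n) × CornerPair n =>
      (U.1, x.2.1)) (by fun_prop)).inter <|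
    (isOpen_setOf_strongLT.preimage (f := fun x : (A → CornerPair n) × CornerPair n =>
      (x.2.2, U.2)) (by fun_prop)).inter <|
    hT.isOpen_biInter fun a _ => isOpen_setOf_boxSep.preimage
      (f := fun x : (A → CornerPair n) × CornerPair n => (x.2, x.1 a)) (by fun_prop)

theorem isOpen_setOf_isBoxFamilyOn [Finite n] (U : CornerPair n) {T : Set A} (hT : T.Finite) :
    IsOpen {C : A → CornerPair n | IsBoxFamilyOn U T C} := by
  simp only [isBoxFamilyOn_iff, ofPred_and, ofPred_forall, Set.Pairwise]
  refine (hT.isOpen_biInter fun a _ => ?_).inter <| (hT.isOpen_biInter fun a _ => ?_).inter <|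
    (hT.isOpen_biInter fun a _ => ?_).inter <| hT.isOpen_biInter fun a _ =>
      hT.isOpen_biInter fun a' _ => isOpen_iInter_of_finite fun _ => ?_
  · exact isOpen_setOf_strongLT.preimage (f := fun C : A → CornerPair n => C a) (by fun_prop)
  · exact isOpen_setOf_strongLT.preimage
      (f := fun C : A → CornerPair n => (U.1, (C a).1)) (by fun_prop)
  · exact isOpen_setOf_strongLT.preimage
      (f := fun C : A → CornerPair n => ((C a).2, U.2)) (by fun_prop)
  · exact isOpen_setOf_boxSep.preimage (f := fun C : A → CornerPair n => (C a, C a')) (by fun_prop)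

end Boxes

section PushOut

variable {n A Z : Type*}

/-- The Minkowski gauge of the translate of the box `B` that is centred at `0`; it measures how far
a point has to be pushed from the midpoint of `B` to leave `B`. Meaningful only for `B.1 ≺ B.2`,
because of the division. -/
noncomputable def boxGauge [Fintype n] (B : CornerPair n) (v : n → ℝ) : ℝ :=
  ‖v / ((2 : ℝ)⁻¹ • (B.2 - B.1))‖

theorem boxGauge_smul [Fintype n] (B : CornerPair n) {r : ℝ} (hr : 0 ≤ r) (v : n → ℝ) :
    boxGauge B (r • v) = r * boxGauge B v := by
  rw [boxGauge, smul_div_assoc, norm_smul, Real.norm_of_nonneg hr, boxGauge]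

theorem boxGauge_pos_iff [Fintype n] {B : CornerPair n} (hB : B.1 ≺ B.2) {v : n → ℝ} :
    0 < boxGauge B v ↔ v ≠ 0 := by
  rw [boxGauge, norm_pos_iff, not_iff_not, funext_iff, funext_iff]
  refine forall_congr' fun i => ?_
  have hi : (2 : ℝ)⁻¹ * (B.2 i - B.1 i) ≠ 0 := mul_ne_zero (by norm_num) (sub_ne_zero.2 (hB i).ne')
  simp [hi]

theorem norm_sub_midpoint_div_half_sub {c d : ℝ} (hcd : c < d) (y : ℝ) :
    ‖(y - midpoint ℝ c d) / (2⁻¹ * (d - c))‖ = dist y ((c + d) / 2) / ((d - c) / 2) := by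
  have hmid : midpoint ℝ c d = (c + d) / 2 := by
    rw [midpoint_eq_smul_add, smul_eq_mul, invOf_eq_inv, inv_mul_eq_div]
  rw [norm_div, hmid, ← dist_eq_norm, Real.norm_of_nonneg (by linarith), inv_mul_eq_div]

theorem boxGauge_sub_midpoint_le_one_iff [Fintype n] {B : CornerPair n} (hB : B.1 ≺ B.2)
    {y : n → ℝ} : boxGauge B (y - midpoint ℝ B.1 B.2) ≤ 1 ↔ y ∈ Icc B.1 B.2 := by
  rw [boxGauge, pi_norm_le_iff_of_nonneg zero_le_one, ← pi_univ_Icc, mem_univ_pi]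
  refine forall_congr' fun i => ?_
  rw [Real.Icc_eq_closedBall, Metric.mem_closedBall, ← div_le_one (half_pos (sub_pos.2 (hB i))),
    ← norm_sub_midpoint_div_half_sub (hB i)]
  simp only [Pi.div_apply, Pi.sub_apply, Pi.smul_apply, smul_eq_mul, pi_midpoint_apply]

theorem boxGauge_sub_midpoint_lt_one_iff [Fintype n] {B : CornerPair n} (hB : B.1 ≺ B.2)
    {y : n → ℝ} : boxGauge B (y - midpoint ℝ B.1 B.2) < 1 ↔ y ∈ openBox B := by
  rw [boxGauge, pi_norm_lt_iff zero_lt_one, openBox, mem_ofPred_eq, StrongLT, StrongLT,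
    ← forall_and]
  refine forall_congr' fun i => ?_
  rw [← mem_Ioo, Real.Ioo_eq_ball, Metric.mem_ball, ← div_lt_one (half_pos (sub_pos.2 (hB i))),
    ← norm_sub_midpoint_div_half_sub (hB i)]
  simp only [Pi.div_apply, Pi.sub_apply, Pi.smul_apply, smul_eq_mul, pi_midpoint_apply]

theorem continuous_boxGauge_comp [Fintype n] [TopologicalSpace Z] {B : Z → CornerPair n}
    {v : Z → n → ℝ} (hB : Continuous B) (hv : Continuous v) (hlt : ∀ z, (B z).1 ≺ (B z).2) :
    Continuous fun z => boxGauge (B z) (v z) := by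
  refine continuous_norm.comp (continuous_pi fun i => ?_)
  refine Continuous.div₀ (by fun_prop) (by fun_prop) fun z => ?_
  exact mul_ne_zero (by norm_num) (sub_ne_zero.2 (hlt z i).ne')

theorem exists_pushOut_boxes [Finite n] [TopologicalSpace Z] {T : Set A} (hT : T.Finite)
    {B : A → C(Z, CornerPair n)} (hlt : ∀ a ∈ T, ∀ z, (B a z).1 ≺ (B a z).2)
    (hsep : ∀ z, T.Pairwise fun a a' => BoxSep (B a z) (B a' z))
    (p : C(Z, n → ℝ)) (hp : ∀ a ∈ T, ∀ z, p z ≠ midpoint ℝ (B a z).1 (B a z).2) :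
    ∃ q : C(Z, n → ℝ), ∀ z, (∀ a ∈ T, q z ∉ openBox (B a z)) ∧
      (q z = p z ∨ ∃ a ∈ T, p z ∈ Icc (B a z).1 (B a z).2 ∧ q z ∈ Icc (B a z).1 (B a z).2) := by
  have := Fintype.ofFinite n
  lift T to Finset A using hT
  have hgauge {a a' : A} (ha : a ∈ T) (ha' : a' ∈ T) (hne : a ≠ a') (z : Z) (y : n → ℝ)
      (hy : boxGauge (B a z) (y - midpoint ℝ (B a z).1 (B a z).2) ≤ 1) :
      1 < boxGauge (B a' z) (y - midpoint ℝ (B a' z).1 (B a' z).2) := by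
    rw [boxGauge_sub_midpoint_le_one_iff (hlt a ha z)] at hy
    rw [← not_le, boxGauge_sub_midpoint_le_one_iff (hlt a' ha' z)]
    exact disjoint_left.1 ((disjoint_Icc_iff_boxSep (hlt a ha z) (hlt a' ha' z)).2
      (hsep z ha ha' hne)) hy
  obtain ⟨q, hq⟩ := exists_pushOut (T := T)
    (m := fun a => ⟨fun z => midpoint ℝ (B a z).1 (B a z).2, by
      simp only [midpoint_eq_smul_add]; fun_prop⟩)
    (N := fun a z => boxGauge (B a z)) (fun a _ z r v hr => boxGauge_smul _ hr v) p
    (fun a ha => continuous_boxGauge_comp (B a).continuous (by fun_prop) (hlt a ha))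
    (fun a ha z => (boxGauge_pos_iff (hlt a ha z)).2 (sub_ne_zero.2 (hp a ha z)))
    (fun a ha a' ha' hne => hgauge ha ha' hne)
  refine ⟨q, fun z => ?_⟩
  obtain ⟨hqp, hout⟩ | ⟨a, ha, hlt_one, heq_one⟩ := hq z
  · refine ⟨fun a ha hin => (hout a ha).not_gt ?_, Or.inl hqp⟩
    exact (boxGauge_sub_midpoint_lt_one_iff (hlt a ha z)).2 (hqp ▸ hin)
  · refine ⟨fun a' ha' hin => ?_, Or.inr ⟨a, ha,
      (boxGauge_sub_midpoint_le_one_iff (hlt a ha z)).1 hlt_one.le,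
      (boxGauge_sub_midpoint_le_one_iff (hlt a ha z)).1 heq_one.le⟩⟩
    have hin' := (boxGauge_sub_midpoint_lt_one_iff (hlt a' ha' z)).2 hin
    obtain rfl | hne := eq_or_ne a a'
    · exact hin'.ne heq_one
    · exact hin'.not_gt (hgauge ha ha' hne z (q z) heq_one.le)

end PushOut

section FreePoint

variable {n A Z S : Type*} [TopologicalSpace Z] [TopologicalSpace S] {e : S → Z}

/-- The box `B` enlarged by `ε` in every coordinate direction. A point that has been pushed out of
the interior of the enlarged box is strictly outside of `B`. -/
def enlargeBox (ε : ℝ) (B : CornerPair n) : CornerPair n :=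
  (B.1 - fun _ => ε, B.2 + fun _ => ε)

@[fun_prop]
theorem continuous_enlargeBox {ε : Z → ℝ} {B : Z → CornerPair n} (hε : Continuous ε)
    (hB : Continuous B) : Continuous fun z => enlargeBox (ε z) (B z) := by
  unfold enlargeBox
  fun_prop

theorem enlargeBox_zero (B : CornerPair n) : enlargeBox 0 B = B :=
  Prod.ext (sub_zero _) (add_zero _)

theorem Icc_subset_openBox_enlargeBox {ε : ℝ} (hε : 0 < ε) (B : CornerPair n) :
    Icc B.1 B.2 ⊆ openBox (enlargeBox ε B) := fun _ hy =>
  ⟨fun i => (sub_lt_self _ hε).trans_le (hy.1 i),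
    fun i => (hy.2 i).trans_lt (lt_add_of_pos_right _ hε)⟩

theorem exists_pos_isBoxFamilyOn_enlargeBox [Finite n] [CompactSpace Z] [CompactSpace S]
    (he : Continuous e) {U : CornerPair n} {T : Set A} (hT : T.Finite) {B : A → C(Z, CornerPair n)}
    (hB : ∀ z, IsBoxFamilyOn U T fun a => B a z) {b : C(S, CornerPair n)}
    (hb : ∀ y, IsFreeBox U T (fun a => B a (e y)) (b y)) :
    ∃ ε > 0, (∀ z, IsBoxFamilyOn U T fun a => enlargeBox ε (B a z)) ∧
      ∀ y, IsFreeBox U T (fun a => enlargeBox ε (B a (e y))) (b y) := by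
  have hfamily : ∀ᶠ ε in 𝓝 (0 : ℝ), ∀ z ∈ univ, IsBoxFamilyOn U T fun a =>
      enlargeBox ε (B a z) := by
    refine isCompact_univ.eventually_forall_of_forall_eventually fun z _ => ?_
    have hF : Continuous fun x : ℝ × Z => fun a => enlargeBox x.1 (B a x.2) := by fun_prop
    refine hF.continuousAt.eventually_mem ((isOpen_setOf_isBoxFamilyOn U hT).mem_nhds ?_)
    simpa only [enlargeBox_zero, mem_ofPred_eq] using hB z
  have hfree : ∀ᶠ ε in 𝓝 (0 : ℝ), ∀ y ∈ univ, IsFreeBox U T (fun a =>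
      enlargeBox ε (B a (e y))) (b y) := by
    refine isCompact_univ.eventually_forall_of_forall_eventually fun y _ => ?_
    have hF : Continuous fun x : ℝ × S => ((fun a => enlargeBox x.1 (B a (e x.2))), b x.2) := by
      fun_prop
    refine hF.continuousAt.eventually_mem ((isOpen_setOf_isFreeBox U hT).mem_nhds ?_)
    simpa only [enlargeBox_zero, mem_ofPred_eq] using hb y
  obtain ⟨ε, ⟨hε₁, hε₂⟩, hε⟩ := (((hfamily.and hfree).filter_mono nhdsWithin_le_nhds).and
    self_mem_nhdsWithin : ∀ᶠ ε in 𝓝[>] (0 : ℝ), _).exists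
  exact ⟨ε, hε, fun z => hε₁ z trivial, fun y => hε₂ y trivial⟩

theorem exists_extension_pi_mem [NormalSpace Z] (he : IsClosedEmbedding e) (f : C(S, n → ℝ))
    {t : n → Set ℝ} (ht : ∀ i, (t i).OrdConnected) (hne : ∀ i, (t i).Nonempty)
    (hf : ∀ y i, f y i ∈ t i) :
    ∃ g : C(Z, n → ℝ), (∀ z i, g z i ∈ t i) ∧ ∀ y, g (e y) = f y := by
  have hcoord (i : n) : ∃ g : C(Z, ℝ), (∀ z, g z ∈ t i) ∧ g ∘ e = fun y => f y i :=
    ContinuousMap.exists_extension_forall_mem_of_isClosedEmbedding ⟨fun y => f y i, by fun_prop⟩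
      (fun y => hf y i) (hne i) he
  choose g hg hgf using hcoord
  exact ⟨ContinuousMap.pi g, fun z i => hg i z, fun y => funext fun i => congr_fun (hgf i) y⟩

theorem midpoint_mem_openBox {B : CornerPair n} (hB : B.1 ≺ B.2) :
    midpoint ℝ B.1 B.2 ∈ openBox B := by
  simp only [midpoint_eq_smul_add, invOf_eq_inv]
  constructor <;> intro i <;> simp only [Pi.smul_apply, Pi.add_apply, smul_eq_mul] <;>
    linarith [hB i]

theorem openBox_subset_openBox {B C : CornerPair n} (h₁ : C.1 ≤ B.1) (h₂ : B.2 ≤ C.2) :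
    openBox B ⊆ openBox C := fun _ hy => ⟨h₁.trans_strongLT hy.1, hy.2.trans_le h₂⟩

theorem exists_extension_mem_openBox_forall_ne [Finite n] [CompactSpace Z] [T2Space Z]
    (hZ : Dense {f : C(Z, n → ℝ) | ∀ z, f z ≠ 0}) (he : IsClosedEmbedding e) {U : CornerPair n}
    (hU : U.1 ≺ U.2) {b : C(S, CornerPair n)} (hb : ∀ y, (b y).1 ≺ (b y).2)
    (hbU : ∀ y, openBox (b y) ⊆ openBox U) {T : Set A} (hT : T.Countable)
    (m : A → C(Z, n → ℝ)) :
    ∃ p : C(Z, n → ℝ), (∀ z, p z ∈ openBox U) ∧ (∀ y, p (e y) ∈ openBox (b y)) ∧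
      ∀ a ∈ T, ∀ z, p z ≠ m a z := by
  have := Fintype.ofFinite n
  have := he.compactSpace
  have := he.isEmbedding.t2Space
  obtain ⟨c, hc, hcb⟩ := exists_extension_pi_mem he
    ⟨fun y => midpoint ℝ (b y).1 (b y).2, by simp only [midpoint_eq_smul_add]; fun_prop⟩
    (t := fun i => Ioo (U.1 i) (U.2 i)) (fun i => ordConnected_Ioo)
    (fun i => nonempty_Ioo.2 (hU i)) fun y i =>
      have hmem := hbU y (midpoint_mem_openBox (hb y))
      ⟨hmem.1 i, hmem.2 i⟩
  have hopenU : IsOpen {p : C(Z, n → ℝ) | ∀ z, p z ∈ openBox U} :=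
    isOpen_setOf_forall_prodMk_mem (isOpen_setOf_mem_openBox.preimage
      (f := fun x : Z × (n → ℝ) => (U, x.2)) (by fun_prop))
  have hopenS : IsOpen {p : C(Z, n → ℝ) | ∀ y, p (e y) ∈ openBox (b y)} :=
    (isOpen_setOf_forall_prodMk_mem (isOpen_setOf_mem_openBox.preimage
      (f := fun x : S × (n → ℝ) => (b x.1, x.2)) (by fun_prop))).preimage
      (ContinuousMap.continuous_precomp ⟨e, he.continuous⟩)
  obtain ⟨p, ⟨hpU, hpb⟩, hpm⟩ := (dense_setOf_forall_ne hZ hT m).inter_open_nonempty _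
    (hopenU.inter hopenS) ⟨c, fun z => ⟨fun i => (hc z i).1, fun i => (hc z i).2⟩,
      fun y => (hcb y).symm ▸ midpoint_mem_openBox (hb y)⟩
  exact ⟨p, hpU, hpb, hpm⟩

theorem exists_extension_isFreeBox_point [Finite n] [CompactSpace Z] [T2Space Z]
    (hZ : Dense {f : C(Z, n → ℝ) | ∀ z, f z ≠ 0}) (he : IsClosedEmbedding e) {U : CornerPair n}
    (hU : U.1 ≺ U.2) {T : Set A} (hT : T.Finite) {B : A → C(Z, CornerPair n)}
    (hB : ∀ z, IsBoxFamilyOn U T fun a => B a z) {b : C(S, CornerPair n)}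
    (hb : ∀ y, (b y).1 ≺ (b y).2) (hbfree : ∀ y, IsFreeBox U T (fun a => B a (e y)) (b y)) :
    ∃ q : C(Z, n → ℝ), (∀ z, IsFreeBox U T (fun a => B a z) (q z, q z)) ∧
      ∀ y, q (e y) ∈ openBox (b y) := by
  have := he.compactSpace
  obtain ⟨ε, hε, hBε, hbε⟩ := exists_pos_isBoxFamilyOn_enlargeBox he.continuous hT hB hbfree
  obtain ⟨p, hpU, hpb, hpm⟩ := exists_extension_mem_openBox_forall_ne hZ he hU hb
    (fun y => openBox_subset_openBox (le_of_strongLT (hbfree y).lower)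
      (le_of_strongLT (hbfree y).upper)) hT.countable
    fun a => ⟨fun z => midpoint ℝ (enlargeBox ε (B a z)).1 (enlargeBox ε (B a z)).2, by
      simp only [midpoint_eq_smul_add]; fun_prop⟩
  obtain ⟨q, hq⟩ := exists_pushOut_boxes hT (B := fun a => ⟨fun z => enlargeBox ε (B a z), by
    fun_prop⟩) (fun a ha z => (hBε z).nondegenerate a ha) (fun z => (hBε z).pairwise_sep) p hpm
  refine ⟨q, fun z => ?_, fun y => ?_⟩
  · have hqU : q z ∈ openBox U := by
      obtain hqp | ⟨a, ha, -, hqa⟩ := (hq z).2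
      · exact hqp ▸ hpU z
      · exact ⟨((hBε z).lower a ha).trans_le hqa.1, hqa.2.trans_strongLT ((hBε z).upper a ha)⟩
    exact ⟨hqU.1, hqU.2, fun a ha => notMem_Icc_iff_boxSep.1 fun hmem =>
      (hq z).1 a ha (Icc_subset_openBox_enlargeBox hε _ hmem)⟩
  · obtain hqp | ⟨a, ha, hpa, -⟩ := (hq (e y)).2
    · exact hqp ▸ hpb y
    · have hpfree := (hbε y).anti (B' := (p (e y), p (e y))) (le_of_strongLT (hpb y).1)
        (le_of_strongLT (hpb y).2)
      exact absurd hpa (notMem_Icc_iff_boxSep.2 (hpfree.sep a ha))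

end FreePoint

section Extension

variable {n A Z S : Type*} [TopologicalSpace Z] [TopologicalSpace S] {e : S → Z}

theorem exists_continuous_pos_forall_prodMk_mem [ParacompactSpace Z] [T2Space Z] {F : Set Z}
    (hF : IsClosed F) {W : Set (ℝ × Z)} (hW : IsOpen W)
    (hmono : ∀ r r' z, r ≤ r' → (r', z) ∈ W → (r, z) ∈ W) (hzero : ∀ z, (0, z) ∈ W)
    (hone : ∀ z ∈ F, (1, z) ∈ W) :
    ∃ t : C(Z, ℝ), ∀ z, 0 < t z ∧ (t z, z) ∈ W ∧ (z ∈ F → t z = 1) := by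
  let scales (z : Z) : Set ℝ := {r | 0 < r ∧ (r, z) ∈ W ∧ (z ∈ F → r = 1)}
  have hconvex (z : Z) : Convex ℝ (scales z) :=
    OrdConnected.convex ⟨fun r hr r' hr' c hc => ⟨hr.1.trans_le hc.1, hmono _ _ _ hc.2 hr'.2.1,
      fun hz => le_antisymm (hc.2.trans_eq (hr'.2.2 hz)) ((hr.2.2 hz).symm.trans_le hc.1)⟩⟩
  refine exists_continuous_forall_mem_convex_of_local_const hconvex fun z => ?_
  by_cases hz : z ∈ F
  · have hnear : ∀ᶠ z' in 𝓝 z, ((1 : ℝ), z') ∈ W :=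
      (Continuous.prodMk_right 1).continuousAt.eventually_mem (hW.mem_nhds (hone z hz))
    exact ⟨1, hnear.mono fun z' hz' => ⟨one_pos, hz', fun _ => rfl⟩⟩
  · have hsmall : ∀ᶠ r in 𝓝 (0 : ℝ), ∀ᶠ z' in 𝓝 z, (r, z') ∈ W :=
      (hW.eventually_mem (hzero z)).curry_nhds
    obtain ⟨r, hr, hr_pos⟩ := ((hsmall.filter_mono nhdsWithin_le_nhds).and
      self_mem_nhdsWithin : ∀ᶠ r in 𝓝[>] (0 : ℝ), _).exists
    exact ⟨r, (hr.and (hF.isOpen_compl.eventually_mem hz)).mono fun z' hz' =>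
      ⟨hr_pos, hz'.1, fun h => absurd h hz'.2⟩⟩

theorem exists_extension_box_of_point [ParacompactSpace Z] [T2Space Z] (he : IsClosedEmbedding e)
    {O : Set (Z × CornerPair n)} (hO : IsOpen O)
    (hanti : ∀ z B B', (z, B) ∈ O → B.1 ≤ B'.1 → B'.2 ≤ B.2 → (z, B') ∈ O) {b : C(S, CornerPair n)}
    (hb : ∀ y, (e y, b y) ∈ O) {q : C(Z, n → ℝ)} (hq : ∀ z, (z, (q z, q z)) ∈ O)
    (hqb : ∀ y, q (e y) ∈ openBox (b y)) :
    ∃ b' : C(Z, CornerPair n), (∀ z, (b' z).1 ≺ (b' z).2) ∧ (∀ z, (z, b' z) ∈ O) ∧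
      ∀ y, b' (e y) = b y := by
  have hcont := he.continuous
  obtain ⟨α, hα, hαb⟩ := exists_extension_pi_mem he ⟨fun y => q (e y) - (b y).1, by fun_prop⟩
    (fun _ => ordConnected_Ioi) (fun _ => nonempty_Ioi) fun y i => sub_pos.2 ((hqb y).1 i)
  obtain ⟨β, hβ, hβb⟩ := exists_extension_pi_mem he ⟨fun y => (b y).2 - q (e y), by fun_prop⟩
    (fun _ => ordConnected_Ioi) (fun _ => nonempty_Ioi) fun y i => sub_pos.2 ((hqb y).2 i)
  let box (r : ℝ) (z : Z) : CornerPair n := (q z - r • α z, q z + r • β z)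
  have hbox_zero (z : Z) : box 0 z = (q z, q z) := by simp [box]
  have hbox_one (y : S) : box 1 (e y) = b y := by simp [box, hαb, hβb]
  have hbox_anti (r r' : ℝ) (z : Z) (hr : r ≤ r') (h : (z, box r' z) ∈ O) : (z, box r z) ∈ O :=
    hanti z _ _ h (fun i => sub_le_sub_left (mul_le_mul_of_nonneg_right hr (hα z i).le) _)
      fun i => add_le_add_right (mul_le_mul_of_nonneg_right hr (hβ z i).le) _
  obtain ⟨t, ht⟩ := exists_continuous_pos_forall_prodMk_mem he.isClosed_range
    (hO.preimage (f := fun x : ℝ × Z => (x.2, box x.1 x.2)) (by fun_prop)) hbox_anti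
    (fun z => show (z, box 0 z) ∈ O from hbox_zero z ▸ hq z)
    (forall_mem_range.2 fun y => show (e y, box 1 (e y)) ∈ O from hbox_one y ▸ hb y)
  refine ⟨⟨fun z => box (t z) z, by fun_prop⟩, fun z i => ?_, fun z => (ht z).2.1, fun y => ?_⟩
  · exact (sub_lt_self _ (mul_pos (ht z).1 (hα z i))).trans
      (lt_add_of_pos_right _ (mul_pos (ht z).1 (hβ z i)))
  · change box (t (e y)) (e y) = b y
    rw [(ht (e y)).2.2 (mem_range_self y), hbox_one]

theorem exists_extension_isFreeBox [Finite n] [CompactSpace Z] [T2Space Z]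
    (hZ : Dense {f : C(Z, n → ℝ) | ∀ z, f z ≠ 0}) (he : IsClosedEmbedding e) {U : CornerPair n}
    (hU : U.1 ≺ U.2) {T : Set A} (hT : T.Finite) {B : A → C(Z, CornerPair n)}
    (hB : ∀ z, IsBoxFamilyOn U T fun a => B a z) {b : C(S, CornerPair n)}
    (hb : ∀ y, (b y).1 ≺ (b y).2) (hbfree : ∀ y, IsFreeBox U T (fun a => B a (e y)) (b y)) :
    ∃ b' : C(Z, CornerPair n), (∀ z, (b' z).1 ≺ (b' z).2) ∧
      (∀ z, IsFreeBox U T (fun a => B a z) (b' z)) ∧ ∀ y, b' (e y) = b y := by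
  obtain ⟨q, hq, hqb⟩ := exists_extension_isFreeBox_point hZ he hU hT hB hb hbfree
  exact exists_extension_box_of_point he (O := {x | IsFreeBox U T (fun a => B a x.1) x.2})
    ((isOpen_setOf_isFreeBox U hT).preimage
      (f := fun x : Z × CornerPair n => ((fun a => B a x.1), x.2)) (by fun_prop))
    (fun _ _ _ h h₁ h₂ => IsFreeBox.anti h h₁ h₂) hbfree hq hqb

theorem exists_extension_isBoxFamilyOn_insert [Finite n] [CompactSpace Z] [T2Space Z]
    (hZ : Dense {f : C(Z, n → ℝ) | ∀ z, f z ≠ 0}) (he : IsClosedEmbedding e) {U : CornerPair n}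
    (hU : U.1 ≺ U.2) {T : Set A} (hT : T.Finite) {a : A} (ha : a ∉ T) {h : A → C(S, CornerPair n)}
    (hh : ∀ y, IsBoxFamilyOn U (insert a T) fun a' => h a' y) {B : A → C(Z, CornerPair n)}
    (hB : ∀ z, IsBoxFamilyOn U T fun a' => B a' z) (hBh : ∀ a' ∈ T, ∀ y, B a' (e y) = h a' y) :
    ∃ B' : A → C(Z, CornerPair n), (∀ z, IsBoxFamilyOn U (insert a T) fun a' => B' a' z) ∧
      (∀ a' ∈ insert a T, ∀ y, B' a' (e y) = h a' y) ∧ EqOn B' B T := by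
  classical
  have hha (y : S) := (isBoxFamilyOn_insert ha).1 (hh y)
  have hfree (y : S) : IsFreeBox U T (fun a' => B a' (e y)) (h a y) :=
    (hha y).2.1.congr fun a' ha' => (hBh a' ha' y).symm
  obtain ⟨b, hb, hbfree, hbh⟩ := exists_extension_isFreeBox hZ he hU hT hB
    (fun y => (hha y).1) hfree
  have hB'a : Function.update B a b a = b := Function.update_self ..
  have hB' : EqOn (Function.update B a b) B T := fun a' ha' =>
    Function.update_of_ne (ne_of_mem_of_not_mem ha' ha) ..
  refine ⟨Function.update B a b, fun z => (isBoxFamilyOn_insert ha).2 ?_, ?_, hB'⟩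
  · rw [hB'a]
    exact ⟨hb z, (hbfree z).congr fun a' ha' => by rw [hB' ha'],
      (hB z).congr fun a' ha' => by rw [hB' ha']⟩
  · rintro a' (rfl | ha') y
    · rw [hB'a, hbh]
    · rw [hB' ha', hBh a' ha']

theorem exists_extension_isBoxFamilyOn [Finite n] [CompactSpace Z] [T2Space Z]
    (hZ : Dense {f : C(Z, n → ℝ) | ∀ z, f z ≠ 0}) (he : IsClosedEmbedding e) {U : CornerPair n}
    (hU : U.1 ≺ U.2) {T₀ T : Set A} (hT₀ : T₀ ⊆ T) (hT : T.Finite)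
    {h : A → C(S, CornerPair n)} (hh : ∀ y, IsBoxFamilyOn U T fun a => h a y)
    {B : A → C(Z, CornerPair n)} (hB : ∀ z, IsBoxFamilyOn U T₀ fun a => B a z)
    (hBh : ∀ a ∈ T₀, ∀ y, B a (e y) = h a y) :
    ∃ B' : A → C(Z, CornerPair n), (∀ z, IsBoxFamilyOn U T fun a => B' a z) ∧
      (∀ a ∈ T, ∀ y, B' a (e y) = h a y) ∧ EqOn B' B T₀ := by
  let Extends (T' : Set A) : Prop := T₀ ⊆ T' ∧ ∃ B' : A → C(Z, CornerPair n),
    (∀ z, IsBoxFamilyOn U T' fun a => B' a z) ∧ (∀ a ∈ T', ∀ y, B' a (e y) = h a y) ∧ EqOn B' B T₀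
  suffices Extends T from this.2
  refine hT.induction_to T₀ hT₀ ⟨Subset.rfl, B, hB, hBh, eqOn_refl B T₀⟩ ?_
  rintro T' hT' ⟨hT₀', B', hB', hB'h, hB'B⟩
  obtain ⟨a, haT, haT'⟩ := exists_of_ssubset hT'
  obtain ⟨B'', hB'', hB''h, hB''B'⟩ := exists_extension_isBoxFamilyOn_insert hZ he hU
    (hT.subset hT'.subset) haT' (fun y => (hh y).mono (insert_subset haT hT'.subset)) hB' hB'h
  exact ⟨a, ⟨haT, haT'⟩, hT₀'.trans (subset_insert a T'), B'', hB'', hB''h,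
    (hB''B'.mono hT₀').trans hB'B⟩

end Extension

theorem statement16_general {k : ℕ} {X A A₀ : Type} {Z S : Type*}
    [TopologicalSpace Z] [CompactSpace Z] [T2Space Z] [TopologicalSpace S]
    (hZ : Dense {f : C(Z, Fin k → ℝ) | ∀ z, f z ≠ 0}) {e : S → Z} (he : IsClosedEmbedding e)
    {Bc Bd : X → Fin k → ℝ} (hB : ∀ x, Bc x ≺ Bd x)
    {s : A → X} (hs : ∀ x, (s ⁻¹' {x}).Finite) {ι : A₀ → A} (hι : Function.Injective ι)
    {h : S → OpenBoxTuples k Bc Bd s} (hh : Continuous h)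
    {g : Z → OpenBoxTuples k Bc Bd (s ∘ ι)} (hg : Continuous g)
    (hcompat : ∀ y, (fun a₀ => (h y).1 (ι a₀)) = (g (e y)).1) :
    ∃ G : Z → OpenBoxTuples k Bc Bd s, Continuous G ∧
      (∀ z, (fun a₀ => (G z).1 (ι a₀)) = (g z).1) ∧ ∀ y, G (e y) = h y := by
  let hC (a : A) : C(S, CornerPair (Fin k)) := ⟨fun y => (h y).1 a,
    (continuous_apply a).comp (continuous_subtype_val.comp hh)⟩
  let gC (a₀ : A₀) : C(Z, CornerPair (Fin k)) := ⟨fun z => (g z).1 a₀,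
    (continuous_apply a₀).comp (continuous_subtype_val.comp hg)⟩
  let B : A → C(Z, CornerPair (Fin k)) := Function.extend ι gC 0
  have hBι (a₀ : A₀) : B (ι a₀) = gC a₀ := hι.extend_apply ..
  have hlift (x : X) : ∃ B' : A → C(Z, CornerPair (Fin k)),
      (∀ z, IsBoxFamilyOn (Bc x, Bd x) (s ⁻¹' {x}) fun a => B' a z) ∧
      (∀ a ∈ s ⁻¹' {x}, ∀ y, B' a (e y) = hC a y) ∧ EqOn B' B (ι '' ((s ∘ ι) ⁻¹' {x})) := by
    refine exists_extension_isBoxFamilyOn hZ he (hB x) (image_subset_iff.2 Subset.rfl)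
      (hs x) (fun y => mem_openBoxTuples_iff.1 (h y).2 x) (fun z => ?_) ?_
    · rw [isBoxFamilyOn_image hι]
      exact (mem_openBoxTuples_iff.1 (g z).2 x).congr fun a₀ _ => by simp [hBι, gC]
    · rintro _ ⟨a₀, -, rfl⟩ y
      rw [hBι]
      exact (congr_fun (hcompat y) a₀).symm
  choose B' hB' hB'h hB'B using hlift
  have hmem (z : Z) : (fun a => B' (s a) a z) ∈ OpenBoxTuples k Bc Bd s :=
    mem_openBoxTuples_iff.2 fun x => (hB' x z).congr fun a ha => by rw [← show s a = x from ha]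
  refine ⟨fun z => ⟨fun a => B' (s a) a z, hmem z⟩, by fun_prop, fun z => funext fun a₀ => ?_,
    fun y => Subtype.ext (funext fun a => hB'h (s a) a rfl y)⟩
  change B' (s (ι a₀)) (ι a₀) z = gC a₀ z
  rw [hB'B (s (ι a₀)) (mem_image_of_mem ι rfl), hBι]

/-- Relative lifting property for spaces of labelled boxes:  with `A₀ ⊆ A` (given
by an injection `ι : A₀ → A`) and `ρ : E°({B_x}, s) → E°({B_x}, s₀)` the map
forgetting the boxes labelled by `A \ A₀`, every square
`S^{i-1} → E°({B_x}, s)`, `D^i → E°({B_x}, s₀)` (with `i ≤ k - 1`) admits a lift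
`D^i → E°({B_x}, s)`. -/
theorem statement16 (k : ℕ) (hk : 1 ≤ k) {X A A₀ : Type}
    [Finite X] [Finite A] [Finite A₀]
    (Bc Bd : X → (Fin k → ℝ)) (hB : ∀ x i, Bc x i < Bd x i)
    (s : A → X) (ι : A₀ → A) (hι : Function.Injective ι)
    (i : ℕ) (hi : i ≤ k - 1)
    (h : ↥(Metric.sphere (0 : EuclideanSpace ℝ (Fin i)) 1) →
      ↥(OpenBoxTuples k Bc Bd s))
    (hh : Continuous h)
    (g : ↥(Metric.closedBall (0 : EuclideanSpace ℝ (Fin i)) 1) →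
      ↥(OpenBoxTuples k Bc Bd (s ∘ ι)))
    (hg : Continuous g)
    (hcompat : ∀ (z : EuclideanSpace ℝ (Fin i))
      (hz : z ∈ Metric.sphere (0 : EuclideanSpace ℝ (Fin i)) 1),
      (fun a₀ => ((h ⟨z, hz⟩ : A → (Fin k → ℝ) × (Fin k → ℝ))) (ι a₀))
        = ((g ⟨z, Metric.sphere_subset_closedBall hz⟩ :
            A₀ → (Fin k → ℝ) × (Fin k → ℝ)))) :
    ∃ G : ↥(Metric.closedBall (0 : EuclideanSpace ℝ (Fin i)) 1) →
        ↥(OpenBoxTuples k Bc Bd s),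
      Continuous G ∧
      (∀ z : ↥(Metric.closedBall (0 : EuclideanSpace ℝ (Fin i)) 1),
        (fun a₀ => ((G z : A → (Fin k → ℝ) × (Fin k → ℝ))) (ι a₀))
          = ((g z : A₀ → (Fin k → ℝ) × (Fin k → ℝ)))) ∧
      (∀ (z : EuclideanSpace ℝ (Fin i))
        (hz : z ∈ Metric.sphere (0 : EuclideanSpace ℝ (Fin i)) 1),
        G ⟨z, Metric.sphere_subset_closedBall hz⟩ = h ⟨z, hz⟩) := by
  simpa only [Subtype.forall] using! statement16_general
    (dense_setOf_forall_ne_zero_of_finrank_lt (by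
      rw [finrank_euclideanSpace_fin, finrank_fin_fun]; omega) (isCompact_closedBall 0 1))
    (.inclusion Metric.sphere_subset_closedBall
      (Metric.isClosed_sphere.preimage continuous_subtype_val))
    hB (fun _ => toFinite _) hι hh hg fun y => hcompat y.1 y.2
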